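/- arXiv:2211.03904 — 2 statements merged into one kernel-verified Lean document; each statement's English description precedes it below -/
import Mathlib

section
/- The finite transformation group generated by the generalized x-translation symmetry maps solutions to solutions: if v solves the potential Kawahara–KP equation, f : ℝ → ℝ is any smooth function, and ε is any real number, then the function ṽ(t,x,y) := v(t, x - ε·f(t), y) + ε·x·f'(t) + (ε/(2σ))·y²·f''(t) - (1/2)·ε²·f(t)·f'(t) also solves the potential Kawahara–KP equation. (For f(t) = t this is the Galilean boost in the x direction.) -/
/-!
Passing to the moving frame `x ↦ x - g(t)` changes the Kawahara–KP operator only through the chain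
rule in `t`, by `-g' v_xx`. Adding `a(t) x` changes `v_x` by `a` and so contributes `a v_xx + a'`;
adding `b(t) y²` contributes `-2σb`. Hence `a = g'` cancels the terms in `v_xx`, `b = g''/(2σ)` then
cancels the remaining `g''`, and a summand depending on `t` alone is invisible.
-/

/-- Partial derivative in `t` of a function `v (t, x, y)` given in curried form. -/
noncomputable def pt (v : ℝ → ℝ → ℝ → ℝ) : ℝ → ℝ → ℝ → ℝ :=
  fun t x y => deriv (fun s => v s x y) t

/-- Partial derivative in `x` of a function `v (t, x, y)` given in curried form. -/
noncomputable def px (v : ℝ → ℝ → ℝ → ℝ) : ℝ → ℝ → ℝ → ℝ :=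
  fun t x y => deriv (fun s => v t s y) x

/-- Partial derivative in `y` of a function `v (t, x, y)` given in curried form. -/
noncomputable def py (v : ℝ → ℝ → ℝ → ℝ) : ℝ → ℝ → ℝ → ℝ :=
  fun t x y => deriv (fun s => v t x s) y

/-- The potential Kawahara–KP operator:
`v_tx + v_x·v_xx + β·v_xxxx + v_xxxxxx - σ·v_yy`. -/
noncomputable def KKP (β σ : ℝ) (v : ℝ → ℝ → ℝ → ℝ) : ℝ → ℝ → ℝ → ℝ :=
  fun t x y =>
    px (pt v) t x y + px v t x y * px (px v) t x y
      + β * px (px (px (px v))) t x y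
      + px (px (px (px (px (px v))))) t x y
      - σ * py (py v) t x y

/-- The linearization of the potential Kawahara–KP equation at `v`, applied to `p`:
`p_tx + v_xx·p_x + v_x·p_xx + β·p_xxxx + p_xxxxxx - σ·p_yy`. -/
noncomputable def KKPlin (β σ : ℝ) (v p : ℝ → ℝ → ℝ → ℝ) : ℝ → ℝ → ℝ → ℝ :=
  fun t x y =>
    px (pt p) t x y + px (px v) t x y * px p t x y + px v t x y * px (px p) t x y
      + β * px (px (px (px p))) t x y
      + px (px (px (px (px (px p))))) t x y
      - σ * py (py p) t x y

section PartialDerivatives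

variable {v : ℝ → ℝ → ℝ → ℝ}

lemma hasDerivAt_pt {t x y : ℝ} (hv : DifferentiableAt ℝ ↿v (t, x, y)) :
    HasDerivAt (fun s => v s x y) (pt v t x y) t :=
  (hv.comp (f := fun s : ℝ => (s, x, y)) t (by fun_prop)).hasDerivAt

lemma hasDerivAt_px {t x y : ℝ} (hv : DifferentiableAt ℝ ↿v (t, x, y)) :
    HasDerivAt (fun s => v t s y) (px v t x y) x :=
  (hv.comp (f := fun s : ℝ => (t, s, y)) x (by fun_prop)).hasDerivAt

lemma hasDerivAt_py {t x y : ℝ} (hv : DifferentiableAt ℝ ↿v (t, x, y)) :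
    HasDerivAt (fun s => v t x s) (py v t x y) y :=
  (hv.comp (f := fun s : ℝ => (t, x, s)) y (by fun_prop)).hasDerivAt

lemma fderiv_uncurry_apply {t x y : ℝ} (hv : DifferentiableAt ℝ ↿v (t, x, y)) (a b c : ℝ) :
    fderiv ℝ ↿v (t, x, y) (a, b, c) = a * pt v t x y + b * px v t x y + c * py v t x y := by
  have ht : pt v t x y = fderiv ℝ ↿v (t, x, y) (1, 0, 0) :=
    (hasDerivAt_pt hv).unique (hv.hasFDerivAt.comp_hasDerivAt (f := fun s => (s, x, y)) t
      ((hasDerivAt_id t).prodMk ((hasDerivAt_const t x).prodMk (hasDerivAt_const t y))))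
  have hx : px v t x y = fderiv ℝ ↿v (t, x, y) (0, 1, 0) :=
    (hasDerivAt_px hv).unique (hv.hasFDerivAt.comp_hasDerivAt (f := fun s => (t, s, y)) x
      ((hasDerivAt_const x t).prodMk ((hasDerivAt_id x).prodMk (hasDerivAt_const x y))))
  have hy : py v t x y = fderiv ℝ ↿v (t, x, y) (0, 0, 1) :=
    (hasDerivAt_py hv).unique (hv.hasFDerivAt.comp_hasDerivAt (f := fun s => (t, x, s)) y
      ((hasDerivAt_const y t).prodMk ((hasDerivAt_const y x).prodMk (hasDerivAt_id y))))
  have hbasis : (a, b, c) = a • ((1, 0, 0) : ℝ × ℝ × ℝ) + b • (0, 1, 0) + c • (0, 0, 1) := by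
    simp
  simp only [hbasis, map_add, map_smul, smul_eq_mul, ht, hx, hy]

end PartialDerivatives

section Smoothness

variable {v : ℝ → ℝ → ℝ → ℝ} {m n : WithTop ℕ∞}

lemma contDiff_pt (hv : ContDiff ℝ n ↿v) (hmn : m + 1 ≤ n) : ContDiff ℝ m ↿(pt v) :=
  ContDiff.fderiv_apply (f := fun (q : ℝ × ℝ × ℝ) s => v s q.2.1 q.2.2)
    (hv.comp (by fun_prop : ContDiff ℝ n fun z : (ℝ × ℝ × ℝ) × ℝ => (z.2, z.1.2.1, z.1.2.2)))
    contDiff_fst contDiff_const hmn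

lemma contDiff_px (hv : ContDiff ℝ n ↿v) (hmn : m + 1 ≤ n) : ContDiff ℝ m ↿(px v) :=
  ContDiff.fderiv_apply (f := fun (q : ℝ × ℝ × ℝ) s => v q.1 s q.2.2)
    (hv.comp (by fun_prop : ContDiff ℝ n fun z : (ℝ × ℝ × ℝ) × ℝ => (z.1.1, z.2, z.1.2.2)))
    contDiff_snd.fst contDiff_const hmn

lemma contDiff_py (hv : ContDiff ℝ n ↿v) (hmn : m + 1 ≤ n) : ContDiff ℝ m ↿(py v) :=
  ContDiff.fderiv_apply (f := fun (q : ℝ × ℝ × ℝ) s => v q.1 q.2.1 s)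
    (hv.comp (by fun_prop : ContDiff ℝ n fun z : (ℝ × ℝ × ℝ) × ℝ => (z.1.1, z.1.2.1, z.2)))
    contDiff_snd.snd contDiff_const hmn

end Smoothness

section MovingFrame

/-- The function `v` seen from a frame moving along the `x`-axis, with position `g t` at time `t`:
the map `(t, x, y) ↦ v (t, x - g t, y)`. -/
def xShift (g : ℝ → ℝ) (v : ℝ → ℝ → ℝ → ℝ) : ℝ → ℝ → ℝ → ℝ :=
  fun t x y => v t (x - g t) y

variable {v : ℝ → ℝ → ℝ → ℝ} {g : ℝ → ℝ}

lemma contDiff_xShift {n : WithTop ℕ∞} (hv : ContDiff ℝ n ↿v) (hg : ContDiff ℝ n g) :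
    ContDiff ℝ n ↿(xShift g v) :=
  hv.comp (by fun_prop : ContDiff ℝ n fun q : ℝ × ℝ × ℝ => (q.1, q.2.1 - g q.1, q.2.2))

lemma px_xShift (g : ℝ → ℝ) (v : ℝ → ℝ → ℝ → ℝ) : px (xShift g v) = xShift g (px v) := by
  funext t x y
  exact deriv_comp_sub_const (f := fun s => v t s y) (g t) x

lemma py_xShift (g : ℝ → ℝ) (v : ℝ → ℝ → ℝ → ℝ) : py (xShift g v) = xShift g (py v) :=
  rfl

lemma pt_xShift (hv : Differentiable ℝ ↿v) (hg : Differentiable ℝ g) :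
    pt (xShift g v) =
      fun t x y => xShift g (pt v) t x y - deriv g t * xShift g (px v) t x y := by
  funext t x y
  have hcurve : HasDerivAt (fun s => (s, x - g s, y)) (1, -deriv g t, 0) t :=
    (hasDerivAt_id t).prodMk (((hg t).hasDerivAt.const_sub x).prodMk (hasDerivAt_const t y))
  have hchain : HasDerivAt (fun s => v s (x - g s) y)
      (fderiv ℝ ↿v (t, x - g t, y) (1, -deriv g t, 0)) t :=
    (hv _).hasFDerivAt.comp_hasDerivAt t hcurve
  calc pt (xShift g v) t x y = fderiv ℝ ↿v (t, x - g t, y) (1, -deriv g t, 0) := hchain.deriv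
    _ = pt v t (x - g t) y - deriv g t * px v t (x - g t) y := by
      rw [fderiv_uncurry_apply (hv _)]
      ring

lemma px_pt_xShift (hv : ContDiff ℝ 2 ↿v) (hg : Differentiable ℝ g) (t x y : ℝ) :
    px (pt (xShift g v)) t x y =
      px (pt v) t (x - g t) y - deriv g t * px (px v) t (x - g t) y := by
  have hpt : Differentiable ℝ ↿(pt v) :=
    (contDiff_pt hv one_add_one_eq_two.le).differentiable one_ne_zero
  have hpx : Differentiable ℝ ↿(px v) :=
    (contDiff_px hv one_add_one_eq_two.le).differentiable one_ne_zero
  rw [pt_xShift (hv.differentiable two_ne_zero) hg]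
  exact (((hasDerivAt_px (hpt (t, x - g t, y))).comp_sub_const x (g t)).sub
    (((hasDerivAt_px (hpx (t, x - g t, y))).comp_sub_const x (g t)).const_mul (deriv g t))).deriv

lemma KKP_xShift (β σ : ℝ) (hv : ContDiff ℝ 2 ↿v) (hg : Differentiable ℝ g) (t x y : ℝ) :
    KKP β σ (xShift g v) t x y =
      KKP β σ v t (x - g t) y - deriv g t * px (px v) t (x - g t) y := by
  simp only [KKP, px_pt_xShift hv hg, px_xShift, py_xShift]
  simp only [xShift]
  ring

end MovingFrame

section AddQuadratic

/-- The function `v` with `a(t) x + b(t) y² + c(t)` added to it, the shape of the correction terms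
that make a change of frame a symmetry. -/
def addQuadratic (a b c : ℝ → ℝ) (v : ℝ → ℝ → ℝ → ℝ) : ℝ → ℝ → ℝ → ℝ :=
  fun t x y => v t x y + a t * x + b t * y ^ 2 + c t

variable {v : ℝ → ℝ → ℝ → ℝ} {a b c : ℝ → ℝ}

lemma pt_addQuadratic (hv : Differentiable ℝ ↿v) (ha : Differentiable ℝ a)
    (hb : Differentiable ℝ b) (hc : Differentiable ℝ c) :
    pt (addQuadratic a b c v) = addQuadratic (deriv a) (deriv b) (deriv c) (pt v) := by
  funext t x y
  exact ((((hasDerivAt_pt (hv (t, x, y))).add ((ha t).hasDerivAt.mul_const x)).add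
    ((hb t).hasDerivAt.mul_const (y ^ 2))).add (hc t).hasDerivAt).deriv

lemma px_addQuadratic (hv : Differentiable ℝ ↿v) (a b c : ℝ → ℝ) :
    px (addQuadratic a b c v) = fun t x y => px v t x y + a t := by
  funext t x y
  have hlinear : HasDerivAt (fun s => a t * s) (a t) x := by
    simpa using (hasDerivAt_id x).const_mul (a t)
  exact ((((hasDerivAt_px (hv (t, x, y))).add hlinear).add_const (b t * y ^ 2)).add_const
    (c t)).deriv

lemma px_px_addQuadratic (hv : Differentiable ℝ ↿v) (a b c : ℝ → ℝ) :
    px (px (addQuadratic a b c v)) = px (px v) := by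
  rw [px_addQuadratic hv]
  funext t x y
  exact deriv_add_const (a t)

lemma py_addQuadratic (hv : Differentiable ℝ ↿v) (a b c : ℝ → ℝ) :
    py (addQuadratic a b c v) = fun t x y => py v t x y + 2 * b t * y := by
  funext t x y
  have hsquare : HasDerivAt (fun s => b t * s ^ 2) (2 * b t * y) y :=
    ((hasDerivAt_pow 2 y).const_mul (b t)).congr_deriv (by ring)
  exact ((((hasDerivAt_py (hv (t, x, y))).add_const (a t * x)).add hsquare).add_const (c t)).deriv

lemma py_py_addQuadratic (hv : ContDiff ℝ 2 ↿v) (a b c : ℝ → ℝ) (t x y : ℝ) :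
    py (py (addQuadratic a b c v)) t x y = py (py v) t x y + 2 * b t := by
  have hpy : Differentiable ℝ ↿(py v) :=
    (contDiff_py hv one_add_one_eq_two.le).differentiable one_ne_zero
  have hlinear : HasDerivAt (fun s => 2 * b t * s) (2 * b t) y := by
    simpa using (hasDerivAt_id y).const_mul (2 * b t)
  rw [py_addQuadratic (hv.differentiable two_ne_zero)]
  exact ((hasDerivAt_py (hpy (t, x, y))).add hlinear).deriv

lemma KKP_addQuadratic (β σ : ℝ) (hv : ContDiff ℝ 2 ↿v) (ha : Differentiable ℝ a)
    (hb : Differentiable ℝ b) (hc : Differentiable ℝ c) (t x y : ℝ) :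
    KKP β σ (addQuadratic a b c v) t x y =
      KKP β σ v t x y + a t * px (px v) t x y + deriv a t - 2 * σ * b t := by
  have hd : Differentiable ℝ ↿v := hv.differentiable two_ne_zero
  have hpt : Differentiable ℝ ↿(pt v) :=
    (contDiff_pt hv one_add_one_eq_two.le).differentiable one_ne_zero
  simp only [KKP, pt_addQuadratic hd ha hb hc, px_px_addQuadratic hd, py_py_addQuadratic hv]
  simp only [px_addQuadratic hd, px_addQuadratic hpt]
  ring

end AddQuadratic

lemma KKP_addQuadratic_xShift (β : ℝ) {σ : ℝ} (hσ : σ ≠ 0) {v : ℝ → ℝ → ℝ → ℝ}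
    (hv : ContDiff ℝ 2 ↿v) {g c : ℝ → ℝ} (hg : ContDiff ℝ 3 g) (hc : Differentiable ℝ c)
    (t x y : ℝ) :
    KKP β σ (addQuadratic (deriv g) (fun s => deriv (deriv g) s / (2 * σ)) c (xShift g v)) t x y =
      KKP β σ v t (x - g t) y := by
  have hg₂ : ContDiff ℝ 2 g := hg.of_le (by norm_num)
  have hb : Differentiable ℝ fun s => deriv (deriv g) s / (2 * σ) :=
    (ContDiff.deriv' (n := 2) hg).differentiable_deriv_two.div_const (2 * σ)
  rw [KKP_addQuadratic β σ (contDiff_xShift hv hg₂) hg₂.differentiable_deriv_two hb hc,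
    KKP_xShift β σ hv (hg₂.differentiable two_ne_zero), px_xShift, px_xShift, xShift]
  field_simp
  ring

theorem gen_x_translation_group_KKP_general (β σ : ℝ) (hσ : σ ≠ 0) (v : ℝ → ℝ → ℝ → ℝ)
    (hv : ContDiff ℝ 6 (fun q : ℝ × ℝ × ℝ => v q.1 q.2.1 q.2.2))
    (hsol : ∀ t x y : ℝ, KKP β σ v t x y = 0)
    (f : ℝ → ℝ) (hf : ContDiff ℝ 3 f) (ε : ℝ) :
    ∀ t x y : ℝ,
      KKP β σ
        (fun t x y => v t (x - ε * f t) y + ε * x * deriv f t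
          + (ε / (2 * σ)) * y ^ 2 * deriv (deriv f) t
          - (1 / 2) * ε ^ 2 * f t * deriv f t) t x y = 0 := by
  intro t x y
  let g : ℝ → ℝ := fun s => ε * f s
  let c : ℝ → ℝ := fun s => -(1 / 2 * ε ^ 2 * f s * deriv f s)
  have hg : ContDiff ℝ 3 g := contDiff_const.mul hf
  have hc : Differentiable ℝ c :=
    (((hf.differentiable three_ne_zero).const_mul _).mul
      (hf.of_le (by norm_num)).differentiable_deriv_two).neg
  have hg' : deriv g = fun s => ε * deriv f s := funext fun s => deriv_const_mul_field ε
  have hg'' : deriv (deriv g) = fun s => ε * deriv (deriv f) s := by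
    rw [hg']
    exact funext fun s => deriv_const_mul_field ε
  have hinvariant := KKP_addQuadratic_xShift β hσ (hv.of_le (by norm_num)) hg hc t x y
  rw [hsol, hg'', hg'] at hinvariant
  convert hinvariant using 2
  funext t x y
  simp only [addQuadratic, xShift, g, c]
  ring

/-- The finite transformation group generated by the generalized x-translation
symmetry maps solutions to solutions. -/
theorem gen_x_translation_group_KKP (β σ : ℝ) (hβ : β ≠ 0) (hσ : σ = 1 ∨ σ = -1)
    (v : ℝ → ℝ → ℝ → ℝ)
    (hv : ContDiff ℝ (⊤ : ℕ∞) (fun q : ℝ × ℝ × ℝ => v q.1 q.2.1 q.2.2))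
    (hsol : ∀ t x y : ℝ, KKP β σ v t x y = 0)
    (f : ℝ → ℝ) (hf : ContDiff ℝ (⊤ : ℕ∞) f) (ε : ℝ) :
    ∀ t x y : ℝ,
      KKP β σ
        (fun t x y => v t (x - ε * f t) y + ε * x * deriv f t
          + (ε / (2 * σ)) * y ^ 2 * deriv (deriv f) t
          - (1 / 2) * ε ^ 2 * f t * deriv f t) t x y = 0 :=
  gen_x_translation_group_KKP_general β σ (by rcases hσ with rfl | rfl <;> norm_num) v
    (contDiff_infty.1 hv 6) hsol f (contDiff_infty.1 hf 3) ε
end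

section
/- Generalized y-momentum conservation law for the potential Kawahara–KP equation: if v solves the potential Kawahara–KP equation and f : ℝ → ℝ is any smooth function, then ∂_t T + ∂_x Φˣ + ∂_y Φʸ = 0 holds at every point of ℝ³, where T := (1/2)·v_x·v_y·f(t) + (1/(4σ))·y·v_x²·f'(t) + (1/(2σ))·y·v·f''(t); Φˣ := ( (1/2)·v_t·v_y + (β·v_xxx + (1/2)·v_x² + v_xxxxx)·v_y - (β·v_xx + v_xxxx)·v_xy + v_xxx·v_xxy )·f(t) + y·( (1/4)·v_y² + (1/(2σ))·(β·v_x·v_xxx - (1/2)·β·v_xx² + (1/3)·v_x³ + v_xxxxx·v_x - v_xx·v_xxxx + (1/2)·v_xxx²) )·f'(t) - (1/(2σ))·( x·y·(β·v_xxx + (1/2)·v_x² + v_xxxxx + v_t) - y·(β·v_xx + v_xxxx) )·f''(t) - (1/(12σ²))·y³·(β·v_xxx + (1/2)·v_x² + v_xxxxx + v_t)·f'''(t); and Φʸ := -(1/2)·( (v_x·v_t + σ·v_y² - β·v_xx² + (1/3)·v_x³ + v_xxx²)·f(t) + y·v_x·v_y·f'(t) - x·(y·v_y - v)·f''(t) -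 (1/(2σ))·((1/3)·y³·v_y - y²·v)·f'''(t) ). -/
/-!
The conservation law holds off shell: writing `f⁽ᵏ⁾` for the `k`-th derivative of `f` and
`Q = v_y f + y v_x f⁽¹⁾ / (2σ) - x y f⁽²⁾ / (2σ) - y³ f⁽³⁾ / (12σ²)`, the divergence of the current
`(T, Φˣ, Φʸ)` equals `Q` times the Kawahara–KP operator. The sixth derivative of `v` enters the
divergence only through `∂_x (v_t + S) = KKP + σ v_yy`, where `S = β v_xxx + ½ v_x² + v_xxxxx`, so
`∂_x Φˣ` can be written with the operator in place of `v_xxxxxx`. Both sides are then linear in the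
`f⁽ᵏ⁾`, and the coefficients agree one by one; that of `f` alone is the ordinary `y`-momentum law.
-/

/-- The scalar field `v (t, x, y)` is of class `C^n` jointly in its three variables. The order is a
natural number so that `n + 1` unifies with a numeral. -/
def JointContDiff (n : ℕ) (v : ℝ → ℝ → ℝ → ℝ) : Prop :=
  ContDiff ℝ n ↿v

theorem fderiv_fderiv_apply_comm {𝕜 E F : Type*} [RCLike 𝕜] [NormedAddCommGroup E]
    [NormedSpace 𝕜 E] [NormedAddCommGroup F] [NormedSpace 𝕜 F] {g : E → F} {p : E}
    (hg : ContDiffAt 𝕜 2 g p) (a b : E) :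
    fderiv 𝕜 (fun q => fderiv 𝕜 g q b) p a = fderiv 𝕜 (fun q => fderiv 𝕜 g q a) p b := by
  have hdiff : DifferentiableAt 𝕜 (fderiv 𝕜 g) p :=
    (hg.fderiv_right (m := 1) (by norm_num)).differentiableAt (by norm_num)
  have happly (c : E) :
      fderiv 𝕜 (fun q => fderiv 𝕜 g q c) p = (fderiv 𝕜 (fderiv 𝕜 g) p).flip c := by
    simp [fderiv_clm_apply hdiff (differentiableAt_const c)]
  simpa only [happly, ContinuousLinearMap.flip_apply] using
    hg.isSymmSndFDerivAt (by simp) a b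

namespace JointContDiff

variable {m n : ℕ} {v : ℝ → ℝ → ℝ → ℝ}

theorem of_le (h : JointContDiff n v) (hmn : m ≤ n) : JointContDiff m v :=
  ContDiff.of_le h (by exact_mod_cast hmn)

theorem differentiable_uncurry (h : JointContDiff (n + 1) v) : Differentiable ℝ ↿v :=
  ContDiff.differentiable h (by simp)

theorem hasDerivAt_pt (h : JointContDiff (n + 1) v) (t x y : ℝ) :
    HasDerivAt (fun s => v s x y) (pt v t x y) t :=
  (h.differentiable_uncurry.comp (by fun_prop : Differentiable ℝ fun s : ℝ => (s, x, y))
    t).hasDerivAt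

theorem hasDerivAt_px (h : JointContDiff (n + 1) v) (t x y : ℝ) :
    HasDerivAt (fun s => v t s y) (px v t x y) x :=
  (h.differentiable_uncurry.comp (by fun_prop : Differentiable ℝ fun s : ℝ => (t, s, y))
    x).hasDerivAt

theorem hasDerivAt_py (h : JointContDiff (n + 1) v) (t x y : ℝ) :
    HasDerivAt (fun s => v t x s) (py v t x y) y :=
  (h.differentiable_uncurry.comp (by fun_prop : Differentiable ℝ fun s : ℝ => (t, x, s))
    y).hasDerivAt

theorem uncurry_pt (h : JointContDiff (n + 1) v) :
    ↿(pt v) = fun q => fderiv ℝ ↿v q (1, 0, 0) :=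
  funext fun ⟨t, x, y⟩ =>
    ((h.differentiable_uncurry (t, x, y)).hasFDerivAt.comp_hasDerivAt (f := fun s => (s, x, y)) t
      ((hasDerivAt_id t).prodMk (hasDerivAt_const t (x, y)))).deriv

theorem uncurry_px (h : JointContDiff (n + 1) v) :
    ↿(px v) = fun q => fderiv ℝ ↿v q (0, 1, 0) :=
  funext fun ⟨t, x, y⟩ =>
    ((h.differentiable_uncurry (t, x, y)).hasFDerivAt.comp_hasDerivAt (f := fun s => (t, s, y)) x
      ((hasDerivAt_const x t).prodMk ((hasDerivAt_id x).prodMk (hasDerivAt_const x y)))).deriv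

theorem uncurry_py (h : JointContDiff (n + 1) v) :
    ↿(py v) = fun q => fderiv ℝ ↿v q (0, 0, 1) :=
  funext fun ⟨t, x, y⟩ =>
    ((h.differentiable_uncurry (t, x, y)).hasFDerivAt.comp_hasDerivAt (f := fun s => (t, x, s)) y
      ((hasDerivAt_const y t).prodMk ((hasDerivAt_const y x).prodMk (hasDerivAt_id y)))).deriv

theorem contDiff_fderiv_apply (h : JointContDiff (n + 1) v) (a : ℝ × ℝ × ℝ) :
    ContDiff ℝ n fun q => fderiv ℝ ↿v q a :=
  (ContDiff.fderiv_right h (by simp)).clm_apply contDiff_const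

protected theorem pt (h : JointContDiff (n + 1) v) : JointContDiff n (pt v) := by
  simpa only [JointContDiff, h.uncurry_pt] using h.contDiff_fderiv_apply (1, 0, 0)

protected theorem px (h : JointContDiff (n + 1) v) : JointContDiff n (px v) := by
  simpa only [JointContDiff, h.uncurry_px] using h.contDiff_fderiv_apply (0, 1, 0)

protected theorem py (h : JointContDiff (n + 1) v) : JointContDiff n (py v) := by
  simpa only [JointContDiff, h.uncurry_py] using h.contDiff_fderiv_apply (0, 0, 1)

theorem fderiv_apply_comm (h : JointContDiff (n + 2) v) (a b q : ℝ × ℝ × ℝ) :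
    fderiv ℝ (fun q => fderiv ℝ ↿v q b) q a = fderiv ℝ (fun q => fderiv ℝ ↿v q a) q b :=
  fderiv_fderiv_apply_comm (ContDiff.contDiffAt (h.of_le (Nat.le_add_left 2 n))) a b

theorem pt_px_comm (h : JointContDiff (n + 2) v) : pt (px v) = px (pt v) := by
  funext t x y
  change ↿(pt (px v)) (t, x, y) = ↿(px (pt v)) (t, x, y)
  rw [h.px.uncurry_pt, h.pt.uncurry_px, h.uncurry_px, h.uncurry_pt]
  exact h.fderiv_apply_comm _ _ _

theorem pt_py_comm (h : JointContDiff (n + 2) v) : pt (py v) = py (pt v) := by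
  funext t x y
  change ↿(pt (py v)) (t, x, y) = ↿(py (pt v)) (t, x, y)
  rw [h.py.uncurry_pt, h.pt.uncurry_py, h.uncurry_py, h.uncurry_pt]
  exact h.fderiv_apply_comm _ _ _

theorem px_py_comm (h : JointContDiff (n + 2) v) : px (py v) = py (px v) := by
  funext t x y
  change ↿(px (py v)) (t, x, y) = ↿(py (px v)) (t, x, y)
  rw [h.py.uncurry_px, h.px.uncurry_py, h.uncurry_py, h.uncurry_px]
  exact h.fderiv_apply_comm _ _ _

end JointContDiff

namespace KKP

/-- The flux `S = β v_xxx + ½ v_x² + v_xxxxx`, which puts the equation in the form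
`∂_x (v_t + S) = σ v_yy`. -/
noncomputable def spatialFlux (β : ℝ) (v : ℝ → ℝ → ℝ → ℝ) : ℝ → ℝ → ℝ → ℝ :=
  fun t x y => β * px (px (px v)) t x y + (1 / 2) * (px v t x y) ^ 2
    + px (px (px (px (px v)))) t x y

/-- The `x`-antiderivative `R = β v_xx + v_xxxx` of the linear part of `spatialFlux`. -/
noncomputable def dispersivePotential (β : ℝ) (v : ℝ → ℝ → ℝ → ℝ) : ℝ → ℝ → ℝ → ℝ :=
  fun t x y => β * px (px v) t x y + px (px (px (px v))) t x y

/-- The `x`-antiderivative of `v_x · ∂_x S` with `S` the `spatialFlux`; it carries the `x`-momentum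
of the dispersive terms. -/
noncomputable def xMomentumFlux (β : ℝ) (v : ℝ → ℝ → ℝ → ℝ) : ℝ → ℝ → ℝ → ℝ :=
  fun t x y => β * px v t x y * px (px (px v)) t x y
    - (1 / 2) * β * (px (px v) t x y) ^ 2 + (1 / 3) * (px v t x y) ^ 3
    + px (px (px (px (px v)))) t x y * px v t x y
    - px (px v) t x y * px (px (px (px v))) t x y
    + (1 / 2) * (px (px (px v)) t x y) ^ 2

/-- The `x`-flux of the ordinary `y`-momentum, that is, the coefficient of `f` in `fluxX`. -/
noncomputable def yMomentumFluxX (β : ℝ) (v : ℝ → ℝ → ℝ → ℝ) : ℝ → ℝ → ℝ → ℝ :=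
  fun t x y => (1 / 2) * pt v t x y * py v t x y + spatialFlux β v t x y * py v t x y
    - dispersivePotential β v t x y * py (px v) t x y
    + px (px (px v)) t x y * py (px (px v)) t x y

/-- The `y`-flux of the ordinary `y`-momentum up to the factor `-1/2`, which `fluxY` supplies. -/
noncomputable def yMomentumFluxY (β σ : ℝ) (v : ℝ → ℝ → ℝ → ℝ) : ℝ → ℝ → ℝ → ℝ :=
  fun t x y => px v t x y * pt v t x y + σ * (py v t x y) ^ 2
    - β * (px (px v) t x y) ^ 2 + (1 / 3) * (px v t x y) ^ 3
    + (px (px (px v)) t x y) ^ 2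

/-- The density `T` of the generalized `y`-momentum with time profile `f`. -/
noncomputable def density (σ : ℝ) (v : ℝ → ℝ → ℝ → ℝ) (f : ℝ → ℝ) : ℝ → ℝ → ℝ → ℝ :=
  fun t x y => (1 / 2) * px v t x y * py v t x y * f t
    + (1 / (4 * σ)) * y * (px v t x y) ^ 2 * deriv f t
    + (1 / (2 * σ)) * y * v t x y * deriv (deriv f) t

/-- The `x`-flux `Φˣ` of the generalized `y`-momentum with time profile `f`. -/
noncomputable def fluxX (β σ : ℝ) (v : ℝ → ℝ → ℝ → ℝ) (f : ℝ → ℝ) : ℝ → ℝ → ℝ → ℝ :=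
  fun t x y => yMomentumFluxX β v t x y * f t
    + y * ((1 / 4) * (py v t x y) ^ 2 + (1 / (2 * σ)) * xMomentumFlux β v t x y) * deriv f t
    - (1 / (2 * σ)) * (x * y * (spatialFlux β v t x y + pt v t x y)
        - y * dispersivePotential β v t x y) * deriv (deriv f) t
    - (1 / (12 * σ ^ 2)) * y ^ 3 * (spatialFlux β v t x y + pt v t x y)
        * deriv (deriv (deriv f)) t

/-- The `y`-flux `Φʸ` of the generalized `y`-momentum with time profile `f`. -/
noncomputable def fluxY (β σ : ℝ) (v : ℝ → ℝ → ℝ → ℝ) (f : ℝ → ℝ) : ℝ → ℝ → ℝ → ℝ :=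
  fun t x y => - (1 / 2) * (yMomentumFluxY β σ v t x y * f t
    + y * px v t x y * py v t x y * deriv f t
    - x * (y * py v t x y - v t x y) * deriv (deriv f) t
    - (1 / (2 * σ)) * ((1 / 3) * y ^ 3 * py v t x y - y ^ 2 * v t x y)
        * deriv (deriv (deriv f)) t)

/-- The characteristic of the conservation law: the factor by which the operator `KKP` has to be
multiplied to become a divergence. -/
noncomputable def multiplier (σ : ℝ) (v : ℝ → ℝ → ℝ → ℝ) (f : ℝ → ℝ) : ℝ → ℝ → ℝ → ℝ :=
  fun t x y => py v t x y * f t + (1 / (2 * σ)) * y * px v t x y * deriv f t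
    - (1 / (2 * σ)) * x * y * deriv (deriv f) t
    - (1 / (12 * σ ^ 2)) * y ^ 3 * deriv (deriv (deriv f)) t

variable {n : ℕ} (β σ : ℝ) {v : ℝ → ℝ → ℝ → ℝ} {f : ℝ → ℝ}

theorem hasDerivAt_spatialFlux (hv : JointContDiff (n + 6) v) (t x y : ℝ) :
    HasDerivAt (fun s => spatialFlux β v t s y)
      (KKP β σ v t x y + σ * py (py v) t x y - px (pt v) t x y) x := by
  have h := (((hv.px.px.px.hasDerivAt_px t x y).const_mul β).fun_add
    (((hv.px.hasDerivAt_px t x y).fun_pow 2).const_mul (1 / 2))).fun_add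
    (hv.px.px.px.px.px.hasDerivAt_px t x y)
  refine h.congr_deriv ?_
  simp only [KKP]
  ring

theorem hasDerivAt_dispersivePotential (hv : JointContDiff (n + 5) v) (t x y : ℝ) :
    HasDerivAt (fun s => dispersivePotential β v t s y)
      (spatialFlux β v t x y - (1 / 2) * (px v t x y) ^ 2) x := by
  have h := ((hv.px.px.hasDerivAt_px t x y).const_mul β).fun_add
    (hv.px.px.px.px.hasDerivAt_px t x y)
  refine h.congr_deriv ?_
  simp only [spatialFlux]
  ring

theorem hasDerivAt_xMomentumFlux (hv : JointContDiff (n + 6) v) (t x y : ℝ) :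
    HasDerivAt (fun s => xMomentumFlux β v t s y)
      (px v t x y * (KKP β σ v t x y + σ * py (py v) t x y - px (pt v) t x y)) x := by
  have h₁ := hv.px.hasDerivAt_px t x y
  have h₂ := hv.px.px.hasDerivAt_px t x y
  have h₃ := hv.px.px.px.hasDerivAt_px t x y
  have h₄ := hv.px.px.px.px.hasDerivAt_px t x y
  have h₅ := hv.px.px.px.px.px.hasDerivAt_px t x y
  have h := ((((((h₁.const_mul β).fun_mul h₃).fun_sub
    ((h₂.fun_pow 2).const_mul (1 / 2 * β))).fun_add
    ((h₁.fun_pow 3).const_mul (1 / 3))).fun_add (h₅.fun_mul h₁)).fun_sub (h₂.fun_mul h₄)).fun_add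
    ((h₃.fun_pow 2).const_mul (1 / 2))
  refine h.congr_deriv ?_
  simp only [KKP]
  push_cast
  ring

theorem hasDerivAt_yMomentumFluxX (hv : JointContDiff (n + 6) v) (t x y : ℝ) :
    HasDerivAt (fun s => yMomentumFluxX β v t s y)
      ((KKP β σ v t x y + σ * py (py v) t x y) * py v t x y
        + (1 / 2) * (pt v t x y * py (px v) t x y - px (pt v) t x y * py v t x y)
        + (1 / 2) * (px v t x y) ^ 2 * py (px v) t x y
        - β * px (px v) t x y * py (px (px v)) t x y
        + px (px (px v)) t x y * py (px (px (px v))) t x y) x := by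
  have hy := hv.py.hasDerivAt_px t x y
  have h := ((((hv.pt.hasDerivAt_px t x y).const_mul (1 / 2)).fun_mul hy).fun_add
    ((hasDerivAt_spatialFlux β σ hv t x y).fun_mul hy)).fun_sub
    ((hasDerivAt_dispersivePotential β hv t x y).fun_mul
      (hv.px.py.hasDerivAt_px t x y)) |>.fun_add
    ((hv.px.px.px.hasDerivAt_px t x y).fun_mul (hv.px.px.py.hasDerivAt_px t x y))
  refine h.congr_deriv ?_
  rw [hv.px_py_comm, hv.px.px_py_comm, hv.px.px.px_py_comm]
  simp only [dispersivePotential]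
  ring

theorem hasDerivAt_yMomentumFluxY (hv : JointContDiff (n + 4) v) (t x y : ℝ) :
    HasDerivAt (fun s => yMomentumFluxY β σ v t x s)
      (py (px v) t x y * pt v t x y + px v t x y * py (pt v) t x y
        + 2 * σ * py v t x y * py (py v) t x y
        - 2 * β * px (px v) t x y * py (px (px v)) t x y
        + (px v t x y) ^ 2 * py (px v) t x y
        + 2 * px (px (px v)) t x y * py (px (px (px v))) t x y) y := by
  have h₁ := hv.px.hasDerivAt_py t x y
  have h := ((((h₁.fun_mul (hv.pt.hasDerivAt_py t x y)).fun_add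
    (((hv.py.hasDerivAt_py t x y).fun_pow 2).const_mul σ)).fun_sub
    (((hv.px.px.hasDerivAt_py t x y).fun_pow 2).const_mul β)).fun_add
    ((h₁.fun_pow 3).const_mul (1 / 3))).fun_add ((hv.px.px.px.hasDerivAt_py t x y).fun_pow 2)
  refine h.congr_deriv ?_
  push_cast
  ring

variable {β σ}

theorem pt_density (hv : JointContDiff (n + 2) v) (hf : ContDiff ℝ 3 f) (t x y : ℝ) :
    pt (density σ v f) t x y =
      (1 / 2) * (px (pt v) t x y * py v t x y + px v t x y * py (pt v) t x y) * f t
        + ((1 / 2) * px v t x y * py v t x y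
            + (1 / (2 * σ)) * y * px v t x y * px (pt v) t x y) * deriv f t
        + ((1 / (4 * σ)) * y * (px v t x y) ^ 2 + (1 / (2 * σ)) * y * pt v t x y)
            * deriv (deriv f) t
        + (1 / (2 * σ)) * y * v t x y * deriv (deriv (deriv f)) t := by
  have hf' : ContDiff ℝ 2 (deriv f) := hf.deriv'
  have hf'' : ContDiff ℝ 1 (deriv (deriv f)) := hf'.deriv'
  have hx := hv.px.hasDerivAt_pt t x y
  have h := (((hx.const_mul (1 / 2)).fun_mul (hv.py.hasDerivAt_pt t x y)).fun_mul
      (hf.differentiable (by norm_num) t).hasDerivAt).fun_add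
    (((hx.fun_pow 2).const_mul (1 / (4 * σ) * y)).fun_mul
      (hf'.differentiable (by norm_num) t).hasDerivAt) |>.fun_add
    (((hv.hasDerivAt_pt t x y).const_mul (1 / (2 * σ) * y)).fun_mul
      (hf''.differentiable (by norm_num) t).hasDerivAt)
  refine h.deriv.trans ?_
  rw [hv.pt_px_comm, hv.pt_py_comm]
  push_cast
  ring

theorem px_fluxX (hv : JointContDiff (n + 6) v) (t x y : ℝ) :
    px (fluxX β σ v f) t x y =
      ((KKP β σ v t x y + σ * py (py v) t x y) * py v t x y
          + (1 / 2) * (pt v t x y * py (px v) t x y - px (pt v) t x y * py v t x y)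
          + (1 / 2) * (px v t x y) ^ 2 * py (px v) t x y
          - β * px (px v) t x y * py (px (px v)) t x y
          + px (px (px v)) t x y * py (px (px (px v))) t x y) * f t
        + y * ((1 / 2) * py v t x y * py (px v) t x y + (1 / (2 * σ)) * (px v t x y
            * (KKP β σ v t x y + σ * py (py v) t x y - px (pt v) t x y))) * deriv f t
        - (1 / (2 * σ)) * y * (pt v t x y + (1 / 2) * (px v t x y) ^ 2
            + x * (KKP β σ v t x y + σ * py (py v) t x y)) * deriv (deriv f) t
        - (1 / (12 * σ ^ 2)) * y ^ 3 * (KKP β σ v t x y + σ * py (py v) t x y)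
            * deriv (deriv (deriv f)) t := by
  have hS := (hasDerivAt_spatialFlux β σ hv t x y).fun_add (hv.pt.hasDerivAt_px t x y)
  have h₀ := (hasDerivAt_yMomentumFluxX β σ hv t x y).mul_const (f t)
  have h₁ := ((((hv.py.hasDerivAt_px t x y).fun_pow 2).const_mul (1 / 4)).fun_add
    ((hasDerivAt_xMomentumFlux β σ hv t x y).const_mul (1 / (2 * σ)))).const_mul y
    |>.mul_const (deriv f t)
  have h₂ := ((((hasDerivAt_id' x).mul_const y).fun_mul hS).fun_sub
    ((hasDerivAt_dispersivePotential β hv t x y).const_mul y)).const_mul (1 / (2 * σ))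
    |>.mul_const (deriv (deriv f) t)
  have h₃ := (hS.const_mul (1 / (12 * σ ^ 2) * y ^ 3)).mul_const (deriv (deriv (deriv f)) t)
  refine (((h₀.fun_add h₁).fun_sub h₂).fun_sub h₃).deriv.trans ?_
  rw [hv.px_py_comm]
  push_cast
  ring

theorem py_fluxY (hv : JointContDiff (n + 4) v) (t x y : ℝ) :
    py (fluxY β σ v f) t x y =
      - (1 / 2) * ((py (px v) t x y * pt v t x y + px v t x y * py (pt v) t x y
            + 2 * σ * py v t x y * py (py v) t x y
            - 2 * β * px (px v) t x y * py (px (px v)) t x y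
            + (px v t x y) ^ 2 * py (px v) t x y
            + 2 * px (px (px v)) t x y * py (px (px (px v))) t x y) * f t
          + (px v t x y * py v t x y + y * py (px v) t x y * py v t x y
            + y * px v t x y * py (py v) t x y) * deriv f t
          - x * y * py (py v) t x y * deriv (deriv f) t
          - (1 / (2 * σ)) * ((1 / 3) * y ^ 3 * py (py v) t x y - 2 * y * v t x y)
              * deriv (deriv (deriv f)) t) := by
  have hid := hasDerivAt_id' y
  have hv₀ := hv.hasDerivAt_py t x y
  have hvy := hv.py.hasDerivAt_py t x y
  have h₀ := (hasDerivAt_yMomentumFluxY β σ hv t x y).mul_const (f t)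
  have h₁ := ((hid.fun_mul (hv.px.hasDerivAt_py t x y)).fun_mul hvy).mul_const (deriv f t)
  have h₂ := (((hid.fun_mul hvy).fun_sub hv₀).const_mul x).mul_const (deriv (deriv f) t)
  have h₃ := (((((hid.fun_pow 3).const_mul (1 / 3)).fun_mul hvy).fun_sub
    ((hid.fun_pow 2).fun_mul hv₀)).const_mul (1 / (2 * σ))).mul_const (deriv (deriv (deriv f)) t)
  refine ((((h₀.fun_add h₁).fun_sub h₂).fun_sub h₃).const_mul (-(1 / 2))).deriv.trans ?_
  push_cast
  ring

end KKP

theorem gen_y_momentum_conservation_KKP_general {β σ : ℝ} (hσ : σ ≠ 0) {v : ℝ → ℝ → ℝ → ℝ}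
    (hv : JointContDiff 6 v) {f : ℝ → ℝ} (hf : ContDiff ℝ 3 f) (t x y : ℝ) :
    pt (KKP.density σ v f) t x y + px (KKP.fluxX β σ v f) t x y + py (KKP.fluxY β σ v f) t x y
      = KKP.multiplier σ v f t x y * KKP β σ v t x y := by
  rw [KKP.pt_density hv hf, KKP.px_fluxX hv, KKP.py_fluxY hv]
  simp only [KKP.multiplier]
  field_simp
  ring

/-- Generalized y-momentum conservation law for the potential Kawahara–KP equation. -/
theorem gen_y_momentum_conservation_KKP (β σ : ℝ) (hβ : β ≠ 0) (hσ : σ = 1 ∨ σ = -1)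
    (v : ℝ → ℝ → ℝ → ℝ)
    (hv : ContDiff ℝ (⊤ : ℕ∞) (fun q : ℝ × ℝ × ℝ => v q.1 q.2.1 q.2.2))
    (hsol : ∀ t x y : ℝ, KKP β σ v t x y = 0)
    (f : ℝ → ℝ) (hf : ContDiff ℝ (⊤ : ℕ∞) f)
    (T Φx Φy : ℝ → ℝ → ℝ → ℝ)
    (hT : T = fun t x y =>
      (1 / 2) * px v t x y * py v t x y * f t
        + (1 / (4 * σ)) * y * (px v t x y) ^ 2 * deriv f t
        + (1 / (2 * σ)) * y * v t x y * deriv (deriv f) t)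
    (hΦx : Φx = fun t x y =>
      ((1 / 2) * pt v t x y * py v t x y
          + (β * px (px (px v)) t x y + (1 / 2) * (px v t x y) ^ 2
              + px (px (px (px (px v)))) t x y) * py v t x y
          - (β * px (px v) t x y + px (px (px (px v))) t x y) * py (px v) t x y
          + px (px (px v)) t x y * py (px (px v)) t x y) * f t
        + y * ((1 / 4) * (py v t x y) ^ 2
            + (1 / (2 * σ)) * (β * px v t x y * px (px (px v)) t x y
                - (1 / 2) * β * (px (px v) t x y) ^ 2 + (1 / 3) * (px v t x y) ^ 3
                + px (px (px (px (px v)))) t x y * px v t x y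
                - px (px v) t x y * px (px (px (px v))) t x y
                + (1 / 2) * (px (px (px v)) t x y) ^ 2)) * deriv f t
        - (1 / (2 * σ)) * (x * y * (β * px (px (px v)) t x y
              + (1 / 2) * (px v t x y) ^ 2 + px (px (px (px (px v)))) t x y
              + pt v t x y)
            - y * (β * px (px v) t x y + px (px (px (px v))) t x y))
            * deriv (deriv f) t
        - (1 / (12 * σ ^ 2)) * y ^ 3 * (β * px (px (px v)) t x y
            + (1 / 2) * (px v t x y) ^ 2 + px (px (px (px (px v)))) t x y
            + pt v t x y) * deriv (deriv (deriv f)) t)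
    (hΦy : Φy = fun t x y =>
      - (1 / 2) * ((px v t x y * pt v t x y + σ * (py v t x y) ^ 2
            - β * (px (px v) t x y) ^ 2 + (1 / 3) * (px v t x y) ^ 3
            + (px (px (px v)) t x y) ^ 2) * f t
          + y * px v t x y * py v t x y * deriv f t
          - x * (y * py v t x y - v t x y) * deriv (deriv f) t
          - (1 / (2 * σ)) * ((1 / 3) * y ^ 3 * py v t x y - y ^ 2 * v t x y)
              * deriv (deriv (deriv f)) t)) :
    ∀ t x y : ℝ, pt T t x y + px Φx t x y + py Φy t x y = 0 := by
  subst hT hΦx hΦy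
  intro t x y
  have hσ₀ : σ ≠ 0 := by rcases hσ with rfl | rfl <;> norm_num
  exact (gen_y_momentum_conservation_KKP_general hσ₀ (contDiff_infty.1 hv 6)
    (contDiff_infty.1 hf 3) t x y).trans (by rw [hsol, mul_zero])
end
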